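/- arXiv:1206.4176 — 2 statements merged into one kernel-verified Lean document; each statement's English description precedes it below -/
import Mathlib

section
/- Let M ≥ 1 be an integer, let ℓ > 0, w > 0, θ ∈ (0,1], p_c > 0, and let a > 0 (effective channel gain) and I ≥ 0 (interference-plus-noise power, held fixed). Define the SINR γ(p) = a·p/(I + σ²) with σ² > 0, and the energy-efficiency utility u(p) = ℓ · w·log₂(1 + θ·γ(p)) · (1 − exp(−γ(p)))^M / (p + p_c). Then u is quasiconcave on the interval [0, ∞); that is, for all p₁, p₂ ≥ 0 and all λ ∈ (0,1), u(λ·p₁ + (1−λ)·p₂) ≥ min{u(p₁), u(p₂)}. -/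
theorem aux_ratio (x y c A B : ℝ) (hx : 0 < x) (hxy : x ≤ y) (hc : 0 < c) (hA : 0 < A)
    (h : A / x ≤ B / y) : (y + c) / B ≤ (x + c) / A := by
  have hy : 0 < y := lt_of_lt_of_le hx hxy
  rw [div_le_div_iff₀ hx hy] at h
  have hAB : A ≤ B := by
    by_contra hcon
    push Not at hcon
    nlinarith [mul_lt_mul_of_pos_right hcon hx, mul_le_mul_of_nonneg_left hxy hA.le]
  rw [div_le_div_iff₀ (lt_of_lt_of_le hA hAB) hA]
  nlinarith [mul_le_mul_of_nonneg_left hAB hc.le]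

theorem aux_exp (x y : ℝ) (hx : 0 < x) (hxy : x ≤ y) :
    (Real.exp x - 1) / x ≤ (Real.exp y - 1) / y := by
  have := convexOn_exp.secant_mono (a := 0) (x := x) (y := y) trivial trivial trivial
    hx.ne' (by linarith) hxy
  simpa using this

theorem aux_log (θ x y : ℝ) (hθ : 0 < θ) (hx : 0 < x) (hxy : x ≤ y) :
    ((1 + θ * x) * Real.log (1 + θ * x)) / x ≤ ((1 + θ * y) * Real.log (1 + θ * y)) / y := by
  have hy : 0 < y := lt_of_lt_of_le hx hxy
  have h1 : 0 < θ * x := mul_pos hθ hx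
  have h2 : 0 < θ * y := mul_pos hθ hy
  have := Real.convexOn_mul_log.secant_mono (a := 1) (x := 1 + θ * x) (y := 1 + θ * y)
    (by simp) (by simp; linarith) (by simp; linarith)
    (by linarith) (by linarith) (by nlinarith)
  simp only [Real.log_one, mul_zero, sub_zero, add_sub_cancel_left] at this
  rw [div_le_div_iff₀ h1 h2] at this
  rw [div_le_div_iff₀ hx hy]
  nlinarith

/-- The scaled logarithmic derivative. -/
noncomputable def auxS (M : ℕ) (θ c x : ℝ) : ℝ :=
  θ * ((x + c) / ((1 + θ * x) * Real.log (1 + θ * x))) + M * ((x + c) / (Real.exp x - 1))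

/-- The logarithm of the normalized utility. -/
noncomputable def auxF (M : ℕ) (θ c x : ℝ) : ℝ :=
  Real.log (Real.log (1 + θ * x)) + M * Real.log (1 - Real.exp (-x)) - Real.log (x + c)

theorem aux_pos (θ x : ℝ) (hθ : 0 < θ) (hx : 0 < x) :
    0 < Real.log (1 + θ * x) ∧ 0 < 1 - Real.exp (-x) ∧ 0 < Real.exp x - 1 := by
  have h1 : 0 < θ * x := mul_pos hθ hx
  refine ⟨Real.log_pos (by linarith), ?_, ?_⟩
  · have : Real.exp (-x) < 1 := Real.exp_lt_one_iff.2 (by linarith)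
    linarith
  · have : 1 < Real.exp x := Real.one_lt_exp_iff.2 hx
    linarith

theorem auxS_anti (M : ℕ) (θ c x y : ℝ) (hθ : 0 < θ) (hc : 0 < c) (hx : 0 < x) (hxy : x ≤ y) :
    auxS M θ c y ≤ auxS M θ c x := by
  obtain ⟨h1, _, h3⟩ := aux_pos θ x hθ hx
  unfold auxS
  have hA := aux_ratio x y c _ _ hx hxy hc (by positivity) (aux_log θ x y hθ hx hxy)
  have hB := aux_ratio x y c _ _ hx hxy hc h3 (aux_exp x y hx hxy)
  gcongr

theorem auxF_deriv (M : ℕ) (θ c x : ℝ) (hθ : 0 < θ) (hc : 0 < c) (hx : 0 < x) :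
    HasDerivAt (auxF M θ c) ((auxS M θ c x - 1) / (x + c)) x := by
  obtain ⟨h1, h2, h3⟩ := aux_pos θ x hθ hx
  have hp : 0 < 1 + θ * x := by positivity
  have hq : 0 < x + c := by positivity
  have d1 : HasDerivAt (fun x => 1 + θ * x) θ x := by
    simpa using ((hasDerivAt_id x).const_mul θ).const_add 1
  have d2 := (d1.log hp.ne').log h1.ne'
  have d3 : HasDerivAt (fun x => 1 - Real.exp (-x)) (Real.exp (-x)) x := by
    simpa using ((hasDerivAt_id x).neg.exp).const_sub 1
  have d4 := (d3.log h2.ne').const_mul (M : ℝ)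
  have d5 := ((hasDerivAt_id x).add_const c).log (by simpa using hq.ne')
  have d := (d2.add d4).sub d5
  have e : Real.exp (-x) / (1 - Real.exp (-x)) = 1 / (Real.exp x - 1) := by
    rw [div_eq_div_iff h2.ne' h3.ne', mul_sub, ← Real.exp_add]
    simp
  have : (auxS M θ c x - 1) / (x + c) = θ / (1 + θ * x) / Real.log (1 + θ * x)
      + M * (Real.exp (-x) / (1 - Real.exp (-x))) - 1 / (id x + c) := by
    rw [e]
    unfold auxS
    simp only [id]
    field_simp
  rw [this]
  exact d

theorem auxF_qc (M : ℕ) (θ c x y z : ℝ) (hθ : 0 < θ) (hc : 0 < c) (hx : 0 < x)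
    (hxy : x ≤ y) (hyz : y ≤ z) :
    auxF M θ c x ≤ auxF M θ c y ∨ auxF M θ c z ≤ auxF M θ c y := by
  have hy : 0 < y := lt_of_lt_of_le hx hxy
  rcases le_total 1 (auxS M θ c y) with h | h
  · left
    refine monotoneOn_of_hasDerivWithinAt_nonneg (convex_Icc x y)
      (f' := fun t => (auxS M θ c t - 1) / (t + c)) ?_ ?_ ?_
      (Set.left_mem_Icc.2 hxy) (Set.right_mem_Icc.2 hxy) hxy
    · intro t ht
      exact (auxF_deriv M θ c t hθ hc (by linarith [ht.1])).continuousAt.continuousWithinAt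
    · intro t ht
      have ht := interior_subset ht
      exact (auxF_deriv M θ c t hθ hc (by linarith [ht.1])).hasDerivWithinAt
    · intro t ht
      have ht := interior_subset ht
      have h0 : 0 < t := by linarith [ht.1]
      have := auxS_anti M θ c t y hθ hc h0 ht.2
      exact div_nonneg (by linarith) (by linarith)
  · right
    refine antitoneOn_of_hasDerivWithinAt_nonpos (convex_Icc y z)
      (f' := fun t => (auxS M θ c t - 1) / (t + c)) ?_ ?_ ?_
      (Set.left_mem_Icc.2 hyz) (Set.right_mem_Icc.2 hyz) hyz
    · intro t ht
      exact (auxF_deriv M θ c t hθ hc (by linarith [ht.1])).continuousAt.continuousWithinAt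
    · intro t ht
      have ht := interior_subset ht
      exact (auxF_deriv M θ c t hθ hc (by linarith [ht.1])).hasDerivWithinAt
    · intro t ht
      have ht := interior_subset ht
      have h0 : 0 < t := by linarith [ht.1]
      have := auxS_anti M θ c y t hθ hc hy ht.1
      exact div_nonpos_of_nonpos_of_nonneg (by linarith) (by linarith)

theorem auxF_exp (M : ℕ) (θ c x : ℝ) (hθ : 0 < θ) (hc : 0 < c) (hx : 0 < x) :
    Real.exp (auxF M θ c x) = Real.log (1 + θ * x) * (1 - Real.exp (-x)) ^ M / (x + c) := by
  obtain ⟨h1, h2, h3⟩ := aux_pos θ x hθ hx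
  unfold auxF
  rw [Real.exp_sub, Real.exp_add, Real.exp_log h1, Real.exp_log (by positivity),
    Real.exp_nat_mul, Real.exp_log h2]


/-- Quasiconcavity of the energy-efficiency utility
`u(p) = ℓ · w·log₂(1 + θ·γ(p)) · (1 − exp(−γ(p)))^M / (p + p_c)`
with SINR `γ(p) = a·p/(I + σ²)`, on `[0, ∞)`. -/
theorem ee_utility_quasiconcave
    (M : ℕ) (hM : 1 ≤ M)
    (ℓ w θ pc a I σ2 : ℝ)
    (hℓ : 0 < ℓ) (hw : 0 < w) (hθ0 : 0 < θ) (hθ1 : θ ≤ 1)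
    (hpc : 0 < pc) (ha : 0 < a) (hI : 0 ≤ I) (hσ : 0 < σ2)
    (γ : ℝ → ℝ) (hγ : ∀ p, γ p = a * p / (I + σ2))
    (u : ℝ → ℝ)
    (hu : ∀ p, u p =
      ℓ * (w * Real.logb 2 (1 + θ * γ p)) * (1 - Real.exp (-(γ p))) ^ M / (p + pc)) :
    ∀ p₁ p₂ : ℝ, 0 ≤ p₁ → 0 ≤ p₂ → ∀ lam : ℝ, 0 < lam → lam < 1 →
      u (lam * p₁ + (1 - lam) * p₂) ≥ min (u p₁) (u p₂) := by

  have hN : 0 < I + σ2 := by linarith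
  have hlog2 : 0 < Real.log 2 := Real.log_pos (by norm_num)
  obtain ⟨b, hb⟩ : ∃ b, b = a / (I + σ2) := ⟨_, rfl⟩
  have hb0 : 0 < b := hb ▸ div_pos ha hN
  have hγ' : ∀ p, γ p = b * p := fun p => by rw [hγ, hb]; ring
  have hc : 0 < b * pc := mul_pos hb0 hpc
  have hK : 0 < ℓ * w * b / Real.log 2 := by positivity
  have hu0 : u 0 = 0 := by rw [hu, hγ']; simp
  have hupos : ∀ p, 0 < p →
      u p = ℓ * w * b / Real.log 2 * Real.exp (auxF M θ (b * pc) (b * p)) := by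
    intro p hp
    rw [auxF_exp M θ (b * pc) (b * p) hθ0 hc (mul_pos hb0 hp), hu, hγ', Real.logb]
    have : 0 < p + pc := by linarith
    rw [← mul_add]
    field_simp
  have key : ∀ x y z : ℝ, 0 ≤ x → x ≤ y → y ≤ z → min (u x) (u z) ≤ u y := by
    intro x y z hx hxy hyz
    rcases hx.eq_or_lt with h | h
    · subst h
      refine (min_le_left _ _).trans ?_
      rcases hxy.eq_or_lt with h | h
      · rw [h]
      · rw [hu0, hupos y h]
        positivity
    · have hy : 0 < y := lt_of_lt_of_le h hxy
      have hz : 0 < z := lt_of_lt_of_le hy hyz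
      rw [min_le_iff, hupos x h, hupos y hy, hupos z hz]
      rcases auxF_qc M θ (b * pc) (b * x) (b * y) (b * z) hθ0 hc (mul_pos hb0 h)
        (mul_le_mul_of_nonneg_left hxy hb0.le) (mul_le_mul_of_nonneg_left hyz hb0.le) with h | h
      · left
        exact mul_le_mul_of_nonneg_left (Real.exp_le_exp.2 h) hK.le
      · right
        exact mul_le_mul_of_nonneg_left (Real.exp_le_exp.2 h) hK.le
  intro p₁ p₂ h1 h2 lam hl0 hl1
  rcases le_total p₁ p₂ with h | h
  · exact key _ _ _ h1 (by nlinarith) (by nlinarith)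
  · rw [min_comm]
    exact key _ _ _ h2 (by nlinarith) (by nlinarith)
end

section
/- Consider K users with maximum power P_max > 0, circuit power p_c > 0, and matched-filter SINRs γ_k(p) = a_k·p_k/(Σ_{j≠k} b_{kj}·p_j + σ_k²), where a_k > 0, b_{kj} ≥ 0, σ_k² > 0, and utilities u_k(p) = ℓ · w·log₂(1 + θ·γ_k(p)) · (1 − exp(−γ_k(p)))^M/(p_k + p_c). For each k let γ_k* > 0 be the unique maximizer of the function γ ↦ ℓ·w·log₂(1+θγ)·(1−e^{−γ})^M/(γ·Ĩ_k + p_c) (assumed to exist and be unique). If p* and q* are two Nash equilibria of this game, i.e., vectors in [0, P_max]^K such that for every k and every p ∈ [0, P_max], u_k(p*_k, p*_{−k}) ≥ u_k(p, p*_{−k}) (and likewise for q*), and in both equilibria every user attains its optimal SINR, γ_k(p*) = γ_k* = γ_k(q*) for all k, then p* = q*. -/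
theorem fixed_point_le_aux {K : ℕ} (a : Fin K → ℝ) (ha : ∀ k, 0 < a k)
    (b : Fin K → Fin K → ℝ) (hb : ∀ k j, 0 ≤ b k j)
    (s : Fin K → ℝ) (hs : ∀ k, 0 < s k) (g : Fin K → ℝ) (hg : ∀ k, 0 < g k)
    (p q : Fin K → ℝ) (hq : ∀ k, 0 ≤ q k)
    (hpe : ∀ k, a k * p k = g k * (∑ j ∈ Finset.univ.erase k, b k j * p j + s k))
    (hqe : ∀ k, a k * q k = g k * (∑ j ∈ Finset.univ.erase k, b k j * q j + s k)) :
    ∀ k, p k ≤ q k := by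
  intro i
  have hqpos : ∀ k, 0 < q k := by
    intro k
    have h1 : 0 ≤ ∑ j ∈ Finset.univ.erase k, b k j * q j :=
      Finset.sum_nonneg fun j _ => mul_nonneg (hb k j) (hq j)
    have h2 : 0 < a k * q k := by
      rw [hqe k]
      exact mul_pos (hg k) (by linarith [hs k])
    exact pos_of_mul_pos_right h2 (ha k).le
  obtain ⟨k, -, hk⟩ := Finset.exists_max_image Finset.univ (fun j => p j / q j)
    ⟨i, Finset.mem_univ i⟩
  obtain ⟨t, ht⟩ : ∃ t, t = p k / q k := ⟨_, rfl⟩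
  have hle : ∀ j, p j ≤ t * q j := by
    intro j
    have := hk j (Finset.mem_univ j)
    rw [ht]
    exact (div_le_iff₀ (hqpos j)).1 this
  have hpk : p k = t * q k := by
    rw [ht, div_mul_cancel₀ _ (hqpos k).ne']
  by_cases h1 : t ≤ 1
  · have := hle i
    nlinarith [hqpos i]
  · exfalso
    push Not at h1
    have hsum : ∑ j ∈ Finset.univ.erase k, b k j * p j
        ≤ t * ∑ j ∈ Finset.univ.erase k, b k j * q j := by
      rw [Finset.mul_sum]
      refine Finset.sum_le_sum fun j _ => ?_
      have := mul_le_mul_of_nonneg_left (hle j) (hb k j)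
      linarith
    have hlt : ∑ j ∈ Finset.univ.erase k, b k j * p j + s k
        < t * (∑ j ∈ Finset.univ.erase k, b k j * q j + s k) := by
      nlinarith [hs k]
    have h3 := mul_lt_mul_of_pos_left hlt (hg k)
    have h4 : a k * p k = t * (a k * q k) := by rw [hpk]; ring
    rw [hpe k, hqe k] at h4
    linarith

/-- Uniqueness of the Nash equilibrium of the non-cooperative energy-efficiency
power-control game with matched-filter SINRs, when in both equilibria every user
attains its EE-optimal SINR `γ_k*`. -/
theorem nash_equilibrium_unique
    (K M : ℕ) (hM : 1 ≤ M)
    (ℓ w θ pc Pmax : ℝ)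
    (hℓ : 0 < ℓ) (hw : 0 < w) (hθ0 : 0 < θ) (hθ1 : θ ≤ 1)
    (hpc : 0 < pc) (hPmax : 0 < Pmax)
    (a : Fin K → ℝ) (ha : ∀ k, 0 < a k)
    (b : Fin K → Fin K → ℝ) (hb : ∀ k j, 0 ≤ b k j)
    (σ2 : Fin K → ℝ) (hσ : ∀ k, 0 < σ2 k)
    -- matched-filter SINR of user k under power vector p
    (γ : Fin K → (Fin K → ℝ) → ℝ)
    (hγ : ∀ k p, γ k p =
      a k * p k / (∑ j ∈ Finset.univ.erase k, b k j * p j + σ2 k))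
    -- energy-efficiency utility of user k
    (u : Fin K → (Fin K → ℝ) → ℝ)
    (hu : ∀ k p, u k p =
      ℓ * (w * Real.logb 2 (1 + θ * γ k p)) * (1 - Real.exp (-(γ k p))) ^ M /
        (p k + pc))
    -- normalized interference-plus-noise levels
    (Itld : Fin K → ℝ)
    -- γ* k > 0 is the unique maximizer of γ ↦ ℓ·w·log₂(1+θγ)·(1−e^{−γ})^M/(γ·Ĩ_k + p_c)
    (γstar : Fin K → ℝ) (hγstar_pos : ∀ k, 0 < γstar k)
    (hγstar_max : ∀ k, ∀ g : ℝ, 0 ≤ g → g ≠ γstar k →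
      ℓ * (w * Real.logb 2 (1 + θ * g)) * (1 - Real.exp (-g)) ^ M /
          (g * Itld k + pc) <
      ℓ * (w * Real.logb 2 (1 + θ * γstar k)) * (1 - Real.exp (-(γstar k))) ^ M /
          (γstar k * Itld k + pc))
    -- p* and q* are feasible power vectors
    (pstar qstar : Fin K → ℝ)
    (hp_mem : ∀ k, pstar k ∈ Set.Icc (0 : ℝ) Pmax)
    (hq_mem : ∀ k, qstar k ∈ Set.Icc (0 : ℝ) Pmax)
    -- p* and q* are Nash equilibria
    (hp_nash : ∀ k, ∀ p ∈ Set.Icc (0 : ℝ) Pmax,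
      u k (Function.update pstar k p) ≤ u k pstar)
    (hq_nash : ∀ k, ∀ p ∈ Set.Icc (0 : ℝ) Pmax,
      u k (Function.update qstar k p) ≤ u k qstar)
    -- in both equilibria every user attains its optimal SINR
    (hp_sinr : ∀ k, γ k pstar = γstar k)
    (hq_sinr : ∀ k, γ k qstar = γstar k) :
    pstar = qstar := by
  have key : ∀ p : Fin K → ℝ, (∀ k, p k ∈ Set.Icc (0 : ℝ) Pmax) → (∀ k, γ k p = γstar k) →
      ∀ k, a k * p k = γstar k * (∑ j ∈ Finset.univ.erase k, b k j * p j + σ2 k) := by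
    intro p hp hs k
    have h1 : 0 ≤ ∑ j ∈ Finset.univ.erase k, b k j * p j :=
      Finset.sum_nonneg fun j _ => mul_nonneg (hb k j) (hp j).1
    have h2 : 0 < ∑ j ∈ Finset.univ.erase k, b k j * p j + σ2 k := by linarith [hσ k]
    rw [← hs k, hγ k p, div_mul_cancel₀ _ h2.ne']
  have hP := key pstar hp_mem hp_sinr
  have hQ := key qstar hq_mem hq_sinr
  funext k
  exact le_antisymm
    (fixed_point_le_aux a ha b hb σ2 hσ γstar hγstar_pos pstar qstar
      (fun k => (hq_mem k).1) hP hQ k)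
    (fixed_point_le_aux a ha b hb σ2 hσ γstar hγstar_pos qstar pstar
      (fun k => (hp_mem k).1) hQ hP k)
end
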